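/- Fix t > 0 and integers m̂, m ≥ 1. For (x̂, â) ∈ ℝ^{2m̂} and (x, a) ∈ ℝ^{2m} define R((x̂,â),(x,a)) := inf { Σ_{k=1}^{m̂} I(f_k ∥ p_{x̂_k,â_k}(t)) : f₁,…,f_{m̂} are 1-Lipschitz functions ℝ → ℝ with p_{x̂_k,â_k}(t) ≤ f_k ≤ p_{x̂_k,â_k}(0) pointwise for each k, and max_{1≤k≤m̂} f_k(x_j) = a_j for each j = 1,…,m } ∈ [0, +∞], with inf ∅ := +∞. Then R is lower semicontinuous as a function ℝ^{2m̂} × ℝ^{2m} → [0, +∞]. -/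

import Mathlib

open MeasureTheory

/-- The (shifted) parabola `p(t,x)`: for `t > 0`, `p(t,x) = -t/2 - x²/(2t)` when `|x| ≤ t`
and `p(t,x) = -|x|` otherwise; also `p(0,x) = -|x|`. -/
noncomputable def parab (t x : ℝ) : ℝ :=
  if 0 < t ∧ |x| ≤ t then -t / 2 - x ^ 2 / (2 * t) else -|x|

/-- The shifted parabola `p_{x̂,â}(t,x) = p(t, x - x̂) + â`. -/
noncomputable def parabXA (xh ah t x : ℝ) : ℝ :=
  parab t (x - xh) + ah

/-- The Bernoulli entropy `H(u) = ((1+u)/2)·log(1+u) + ((1-u)/2)·log(1-u)`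
(with `0 · log 0 = 0`, as `Real.log 0 = 0`). -/
noncomputable def Hber (u : ℝ) : ℝ :=
  (1 + u) / 2 * Real.log (1 + u) + (1 - u) / 2 * Real.log (1 - u)

/-- The excess entropy `I(f ∥ p_{x̂,â}(t)) = ∫ ( H(f') - H(∂ₓ p_{x̂,â}(t,·)) )`. -/
noncomputable def excessEntropy (xh ah t : ℝ) (f : ℝ → ℝ) : ℝ :=
  ∫ y : ℝ, (Hber (deriv f y) - Hber (deriv (parabXA xh ah t) y))

/-- The finite-dimensional random-walk rate function `Irw((x̂,â) → (x,a))`, with values in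
`[0,∞]` and `inf ∅ = +∞`. -/
noncomputable def raterw (t : ℝ) (mh m : ℕ) (xa : Fin mh → ℝ × ℝ) (pts : Fin m → ℝ × ℝ) :
    ENNReal :=
  ⨅ (f : Fin mh → ℝ → ℝ)
    (_ : (∀ k, LipschitzWith 1 (f k) ∧
          ∀ y, parabXA (xa k).1 (xa k).2 t y ≤ f k y ∧ f k y ≤ parabXA (xa k).1 (xa k).2 0 y) ∧
        ∀ j, (⨆ k, f k (pts j).1) = (pts j).2),
    ENNReal.ofReal (∑ k, excessEntropy (xa k).1 (xa k).2 t (f k))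

/-!
Translating the `k`-th function by `-(x̂_k, â_k)` turns the competitors for `R` into functions in a
compact set (1-Lipschitz, between `p(t)` and `p(0)`, in the topology of pointwise convergence) which
no longer depends on the data, and makes the functional to be minimized independent of the data too.
The remaining constraint `max_k f_k(x_j) = a_j` is closed, and the infimum of a lower semicontinuous
function over closed constraints in a compact set is lower semicontinuous in the data.

It remains to see that `f ↦ ∫ H(f')` is lower semicontinuous for pointwise convergence. By Jensen,
the slope `(f(y + h) - f(y)) / h` satisfies `H(slope) ≤ h⁻¹ ∫_0^h H(f'(y + s)) ds`. Integrating in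
`y` bounds `∫ H(f')` from below, up to `O(h)`, by the integral of `H(slope)`, which is continuous
in `f` by dominated convergence and converges to `∫ H(f')` as `h → 0+`.
-/

open Filter Set Topology
open scoped NNReal

section CompactMarginal

variable {X Y γ : Type*} [TopologicalSpace X] [TopologicalSpace Y]
  [CompleteLinearOrder γ] [DenselyOrdered γ]

theorem lowerSemicontinuous_biInf_of_isCompact {K : Set Y} {C : Set (X × Y)} {Φ : X × Y → γ}
    (hK : IsCompact K) (hC : IsClosed C) (hCK : ∀ p ∈ C, p.2 ∈ K)
    (hΦ : LowerSemicontinuousOn Φ C) :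
    LowerSemicontinuous fun x => ⨅ y, ⨅ (_ : (x, y) ∈ C), Φ (x, y) := by
  intro x c hc
  obtain ⟨c', hcc', hc'⟩ := exists_between hc
  have tube : ∀ᶠ x' in 𝓝 x, ∀ y ∈ K, (x', y) ∈ C → c' < Φ (x', y) := by
    refine hK.eventually_forall_of_forall_eventually fun y _ => ?_
    by_cases hy : (x, y) ∈ C
    · exact eventually_nhdsWithin_iff.1 (hΦ _ hy c' (hc'.trans_le (iInf₂_le y hy)))
    · filter_upwards [hC.isOpen_compl.mem_nhds hy] with p hp hpC using absurd hpC hp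
  filter_upwards [tube] with x' hx'
  exact hcc'.trans_le (le_iInf₂ fun y hy => (hx' y (hCK _ hy) hy).le)

end CompactMarginal

theorem continuousOn_eval_lipschitzWith {α β : Type*} [PseudoEMetricSpace α]
    [PseudoEMetricSpace β] (K : ℝ≥0) :
    ContinuousOn (fun p : (α → β) × α => p.1 p.2) ({f | LipschitzWith K f} ×ˢ univ) :=
  continuousOn_prod_of_continuousOn_lipschitzOnWith' _ K (fun _ hf => hf.lipschitzOnWith)
    fun x _ => (continuous_apply x).continuousOn

section MovingAverage

variable {ψ : ℝ → ℝ} {M : ℝ}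

theorem intervalIntegrable_of_abs_le (hψ : Measurable ψ) (hM : ∀ y, |ψ y| ≤ M) (a b : ℝ) :
    IntervalIntegrable ψ volume a b :=
  intervalIntegrable_const.mono_fun' hψ.aestronglyMeasurable (Eventually.of_forall hM)

theorem continuous_integral_comp_add_right (hψ : Measurable ψ) (hM : ∀ y, |ψ y| ≤ M) (a b : ℝ) :
    Continuous fun s => ∫ y in a..b, ψ (y + s) := by
  have hint := intervalIntegrable_of_abs_le hψ hM
  have primitive : Continuous fun x => ∫ y in (0)..x, ψ y :=
    intervalIntegral.continuous_primitive hint 0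
  have as_difference : ∀ s, ∫ y in a..b, ψ (y + s) =
      (∫ y in (0)..(b + s), ψ y) - ∫ y in (0)..(a + s), ψ y := fun s => by
    rw [intervalIntegral.integral_comp_add_right,
      intervalIntegral.integral_interval_sub_left (hint _ _) (hint _ _)]
  simp only [as_difference]
  fun_prop

theorem integral_comp_add_right_le (hψ : Measurable ψ) (hM : ∀ y, |ψ y| ≤ M) (a b : ℝ) {s : ℝ}
    (hs : 0 ≤ s) : ∫ y in a..b, ψ (y + s) ≤ (∫ y in a..b, ψ y) + 2 * M * s := by
  have hint := intervalIntegrable_of_abs_le hψ hM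
  have end_le : ∀ c, |∫ y in c..(c + s), ψ y| ≤ M * s := fun c => by
    simpa [abs_of_nonneg hs] using
      intervalIntegral.norm_integral_le_of_norm_le_const (f := ψ) (a := c) (b := c + s)
        fun y _ => hM y
  have shift : ∫ y in a..b, ψ (y + s) =
      (∫ y in a..b, ψ y) + (∫ y in b..(b + s), ψ y) - ∫ y in a..(a + s), ψ y := by
    rw [intervalIntegral.integral_comp_add_right,
      intervalIntegral.integral_add_adjacent_intervals (hint _ _) (hint _ _),
      intervalIntegral.integral_interval_sub_left (hint _ _) (hint _ _)]
  linarith [abs_le.1 (end_le a), abs_le.1 (end_le b)]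

theorem integral_average_le (hψ : Measurable ψ) (hM : ∀ y, |ψ y| ≤ M) (a b : ℝ) {h : ℝ}
    (hh : 0 < h) :
    ∫ y in a..b, h⁻¹ * ∫ s in (0)..h, ψ (y + s) ≤ (∫ y in a..b, ψ y) + 2 * M * h := by
  have hM0 : 0 ≤ M := (abs_nonneg _).trans (hM 0)
  have hψ₂ : Measurable fun p : ℝ × ℝ => ψ (p.1 + p.2) := by fun_prop
  have swap : ∫ y in a..b, ∫ s in (0)..h, ψ (y + s) = ∫ s in (0)..h, ∫ y in a..b, ψ (y + s) := by
    refine intervalIntegral_intervalIntegral_swap (Measure.integrableOn_of_bounded (M := M) ?_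
      hψ₂.aestronglyMeasurable (Eventually.of_forall fun p => hM _))
    rw [Measure.volume_eq_prod, Measure.prod_prod, uIoc, uIoc, Real.volume_Ioc, Real.volume_Ioc]
    finiteness
  have integrated : ∫ s in (0)..h, ∫ y in a..b, ψ (y + s) ≤
      ∫ _ in (0)..h, ((∫ y in a..b, ψ y) + 2 * M * h) := by
    refine intervalIntegral.integral_mono_on hh.le ?_ intervalIntegrable_const fun s hs => ?_
    · exact (continuous_integral_comp_add_right hψ hM a b).intervalIntegrable _ _
    · exact (integral_comp_add_right_le hψ hM a b hs.1).trans (by gcongr; exact hs.2)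
  rw [intervalIntegral.integral_const_mul, swap, inv_mul_le_iff₀ hh]
  simpa only [intervalIntegral.integral_const, sub_zero, smul_eq_mul] using integrated

end MovingAverage

section ConvexEnergy

variable {φ : ℝ → ℝ} {f : ℝ → ℝ} {K : ℝ≥0}

theorem intervalIntegrable_comp_of_mem_Icc (hφ : Continuous φ) {g : ℝ → ℝ} (hg : Measurable g)
    {c d : ℝ} (hmem : ∀ y, g y ∈ Icc c d) (a b : ℝ) :
    IntervalIntegrable (fun y => φ (g y)) volume a b := by
  obtain ⟨M, hM⟩ := isCompact_Icc.exists_bound_of_continuousOn (s := Icc c d) hφ.continuousOn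
  exact intervalIntegrable_of_abs_le (by fun_prop) (fun y => hM _ (hmem y)) a b

theorem deriv_mem_Icc_of_lipschitzWith (hf : LipschitzWith K f) (y : ℝ) :
    deriv f y ∈ Icc (-K : ℝ) K :=
  abs_le.1 (norm_deriv_le_of_lipschitz hf)

theorem slope_mem_Icc_of_lipschitzWith (hf : LipschitzWith K f) {h : ℝ} (hh : 0 < h) (y : ℝ) :
    h⁻¹ * (f (y + h) - f y) ∈ Icc (-K : ℝ) K := by
  have lip := hf.dist_le_mul (y + h) y
  rw [Real.dist_eq, Real.dist_eq, add_sub_cancel_left, abs_of_pos hh] at lip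
  rw [mem_Icc, ← abs_le, abs_mul, abs_inv, abs_of_pos hh]
  rwa [inv_mul_le_iff₀ hh, mul_comm h]

theorem apply_slope_le_average (hφ : Continuous φ) (hconv : ConvexOn ℝ (Icc (-K : ℝ) K) φ)
    (hf : LipschitzWith K f) {h : ℝ} (hh : 0 < h) (y : ℝ) :
    φ (h⁻¹ * (f (y + h) - f y)) ≤ h⁻¹ * ∫ s in (0)..h, φ (deriv f (y + s)) := by
  have hmem : ∀ s, deriv f (y + s) ∈ Icc (-K : ℝ) K := fun s =>
    deriv_mem_Icc_of_lipschitzWith hf (y + s)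
  have hmeas : Measurable fun s => deriv f (y + s) := by fun_prop
  have ftc : ∫ s in (0)..h, deriv f (y + s) = f (y + h) - f y := by
    have := (hf.lipschitzOnWith (s := uIcc y (y + h))).absolutelyContinuousOnInterval
    simpa using this.integral_deriv_eq_sub
  have jensen := hconv.map_set_average_le (μ := volume) (t := Ioc 0 h) hφ.continuousOn
    isClosed_Icc (by simpa) (by simp) (Eventually.of_forall hmem)
    (intervalIntegrable_comp_of_mem_Icc continuous_id hmeas hmem 0 h).1
    (intervalIntegrable_comp_of_mem_Icc hφ hmeas hmem 0 h).1
  simpa [setAverage_eq, ← intervalIntegral.integral_of_le hh.le, ftc, hh.le] using jensen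

/-- The energy `∫_a^b φ(f')` of `f` with the derivative replaced by the difference quotient of
step `h`. Unlike the energy itself it is continuous in `f` for pointwise convergence, while for
convex `φ` it exceeds the energy by at most `O(h)`. -/
noncomputable def slopeEnergy (φ : ℝ → ℝ) (a b h : ℝ) (f : ℝ → ℝ) : ℝ :=
  ∫ y in a..b, φ (h⁻¹ * (f (y + h) - f y))

theorem slopeEnergy_le (hφ : Continuous φ) (hconv : ConvexOn ℝ (Icc (-K : ℝ) K) φ)
    {M : ℝ} (hM : ∀ u ∈ Icc (-K : ℝ) K, |φ u| ≤ M) (hf : LipschitzWith K f)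
    {a b h : ℝ} (hab : a ≤ b) (hh : 0 < h) :
    slopeEnergy φ a b h f ≤ (∫ y in a..b, φ (deriv f y)) + 2 * M * h := by
  have hmeas := hf.continuous.measurable
  have hmem := deriv_mem_Icc_of_lipschitzWith hf
  refine (intervalIntegral.integral_mono_on hab ?_ ?_ fun y _ =>
    apply_slope_le_average hφ hconv hf hh y).trans
    (integral_average_le (by fun_prop) (fun y => hM _ (hmem y)) a b hh)
  · exact intervalIntegrable_comp_of_mem_Icc hφ (by fun_prop)
      (slope_mem_Icc_of_lipschitzWith hf hh) a b
  · have average_cont : Continuous fun y => ∫ s in (0)..h, φ (deriv f (y + s)) := by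
      simpa only [add_comm] using continuous_integral_comp_add_right
        (ψ := fun y => φ (deriv f y)) (by fun_prop) (fun y => hM _ (hmem y)) 0 h
    exact (continuous_const.mul average_cont).intervalIntegrable a b

theorem continuousOn_slopeEnergy (hφ : Continuous φ) (K : ℝ≥0) (a b h : ℝ) :
    ContinuousOn (slopeEnergy φ a b h) {f | LipschitzWith K f} := by
  rw [continuousOn_iff_continuous_domRestrict]
  have eval : Continuous fun p : {f : ℝ → ℝ // LipschitzWith K f} × ℝ => p.1.1 p.2 :=
    (continuousOn_eval_lipschitzWith K).comp_continuous
      (f := fun p : {f : ℝ → ℝ // LipschitzWith K f} × ℝ => (p.1.1, p.2)) (by fun_prop)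
      fun p => ⟨p.1.2, mem_univ _⟩
  have eval_add : Continuous fun p : {f : ℝ → ℝ // LipschitzWith K f} × ℝ => p.1.1 (p.2 + h) :=
    eval.comp (f := fun p : {f : ℝ → ℝ // LipschitzWith K f} × ℝ => (p.1, p.2 + h)) (by fun_prop)
  have integrand : Continuous (Function.uncurry
      fun (f : {f : ℝ → ℝ // LipschitzWith K f}) y => φ (h⁻¹ * (f.1 (y + h) - f.1 y))) :=
    hφ.comp (continuous_const.mul (eval_add.sub eval))
  exact intervalIntegral.continuous_parametric_intervalIntegral_of_continuous' integrand a b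

theorem tendsto_slopeEnergy (hφ : Continuous φ) (hf : LipschitzWith K f) (a b : ℝ) :
    Tendsto (fun h => slopeEnergy φ a b h f) (𝓝[>] 0) (𝓝 (∫ y in a..b, φ (deriv f y))) := by
  obtain ⟨M, hM⟩ := isCompact_Icc.exists_bound_of_continuousOn (s := Icc (-K : ℝ) K) hφ.continuousOn
  have hmeas := hf.continuous.measurable
  refine intervalIntegral.tendsto_integral_filter_of_dominated_convergence (fun _ => M)
    (Eventually.of_forall fun h => ?_) ?_ intervalIntegrable_const ?_
  · exact Measurable.aestronglyMeasurable (by fun_prop)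
  · filter_upwards [self_mem_nhdsWithin] with h hh
    exact Eventually.of_forall fun y _ => hM _ (slope_mem_Icc_of_lipschitzWith hf hh y)
  · filter_upwards [hf.ae_differentiableAt_real] with y hy _
    exact (hφ.tendsto _).comp hy.hasDerivAt.tendsto_slope_zero_right

theorem lowerSemicontinuousOn_integral_comp_deriv (hφ : Continuous φ)
    (hconv : ConvexOn ℝ (Icc (-K : ℝ) K) φ) {a b : ℝ} (hab : a ≤ b) :
    LowerSemicontinuousOn (fun f => ∫ y in a..b, φ (deriv f y)) {f | LipschitzWith K f} := by
  obtain ⟨M, hM⟩ := isCompact_Icc.exists_bound_of_continuousOn (s := Icc (-K : ℝ) K) hφ.continuousOn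
  intro f hf c hc
  have minorant_tendsto : Tendsto (fun h => slopeEnergy φ a b h f - 2 * M * h) (𝓝[>] 0)
      (𝓝 (∫ y in a..b, φ (deriv f y))) := by
    have error_tendsto : Tendsto (fun h => 2 * M * h) (𝓝[>] 0) (𝓝 0) :=
      tendsto_nhdsWithin_of_tendsto_nhds (Continuous.tendsto' (by fun_prop) _ _ (by simp))
    simpa using (tendsto_slopeEnergy hφ hf a b).sub error_tendsto
  obtain ⟨h, hch, hh⟩ :=
    ((minorant_tendsto.eventually_const_lt hc).and self_mem_nhdsWithin).exists
  have minorant_cont := (continuousOn_slopeEnergy hφ K a b h f hf).sub_const (2 * M * h)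
  filter_upwards [minorant_cont.eventually_const_lt hch, self_mem_nhdsWithin] with g hcg hg
  linarith [slopeEnergy_le hφ hconv hM hg hab hh]

end ConvexEnergy

section Bernoulli

theorem Hber_eq_log_two_sub_binEntropy (u : ℝ) :
    Hber u = Real.log 2 - Real.binEntropy ((1 + u) / 2) := by
  have mul_log_half : ∀ v : ℝ, v / 2 * Real.log v =
      v / 2 * Real.log 2 + v / 2 * Real.log (v / 2) := fun v => by
    rcases eq_or_ne v 0 with rfl | hv
    · simp
    · rw [Real.log_div hv two_ne_zero]
      ring
  have one_sub : 1 - (1 + u) / 2 = (1 - u) / 2 := by ring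
  rw [Hber, Real.binEntropy_eq_negMulLog_add_negMulLog_one_sub, Real.negMulLog, Real.negMulLog,
    one_sub, mul_log_half, mul_log_half (1 - u)]
  ring

theorem continuous_Hber : Continuous Hber := by
  rw [funext Hber_eq_log_two_sub_binEntropy]
  fun_prop

theorem convexOn_Hber : ConvexOn ℝ (Icc (-1) 1) Hber := by
  have lineMap_eq : ∀ u, AffineMap.lineMap (k := ℝ) (2⁻¹ : ℝ) 1 u = (1 + u) / 2 := fun u => by
    rw [AffineMap.lineMap_apply_ring']
    ring
  have concave := Real.strictConcave_binEntropy.concaveOn.comp_affineMap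
    (AffineMap.lineMap (k := ℝ) (2⁻¹ : ℝ) 1)
  have domain : AffineMap.lineMap (k := ℝ) (2⁻¹ : ℝ) 1 ⁻¹' Icc (0 : ℝ) 1 = Icc (-1 : ℝ) 1 := by
    ext u
    simp only [mem_preimage, lineMap_eq, mem_Icc]
    constructor <;> rintro ⟨h₀, h₁⟩ <;> constructor <;> linarith
  rw [domain] at concave
  refine (concave.neg.add_const (Real.log 2)).congr fun u _ => ?_
  simp only [Pi.add_apply, Pi.neg_apply, Function.comp_apply, lineMap_eq,
    Hber_eq_log_two_sub_binEntropy]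
  ring

end Bernoulli

section Profiles

variable {t : ℝ}

/-- The function whose graph is that of `g` translated by `(xh, ah)`; used to move every parabola
`p_{x̂,â}` to the origin. -/
def shiftGraph (xh ah : ℝ) (g : ℝ → ℝ) (y : ℝ) : ℝ :=
  g (y - xh) + ah

theorem parabXA_eq_shiftGraph (xh ah t : ℝ) : parabXA xh ah t = shiftGraph xh ah (parab t) := rfl

theorem parabXA_zero_zero (t : ℝ) : parabXA 0 0 t = parab t := by
  funext x
  simp [parabXA]

theorem shiftGraph_surjective (xh ah : ℝ) : Function.Surjective (shiftGraph xh ah) := fun f =>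
  ⟨shiftGraph (-xh) (-ah) f, by funext y; simp [shiftGraph]⟩

theorem shiftGraph_le_shiftGraph_iff {xh ah : ℝ} {f g : ℝ → ℝ} :
    shiftGraph xh ah f ≤ shiftGraph xh ah g ↔ f ≤ g := by
  simp only [Pi.le_def, shiftGraph, add_le_add_iff_right]
  exact (Equiv.subRight xh).forall_congr_right (q := fun y => f y ≤ g y)

theorem lipschitzWith_shiftGraph_iff {K : ℝ≥0} {xh ah : ℝ} {g : ℝ → ℝ} :
    LipschitzWith K (shiftGraph xh ah g) ↔ LipschitzWith K g := by
  simp only [LipschitzWith, shiftGraph, edist_add_right]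
  refine (Equiv.subRight xh).forall_congr fun x => (Equiv.subRight xh).forall_congr fun y => ?_
  simp

theorem excessEntropy_shiftGraph (xh ah t : ℝ) (g : ℝ → ℝ) :
    excessEntropy xh ah t (shiftGraph xh ah g) = excessEntropy 0 0 t g := by
  have deriv_shiftGraph : ∀ (f : ℝ → ℝ) y, deriv (shiftGraph xh ah f) y = deriv f (y - xh) :=
    fun _ _ => (deriv_add_const ah).trans (deriv_comp_sub_const ..)
  simp only [excessEntropy, parabXA_zero_zero, parabXA_eq_shiftGraph xh ah, deriv_shiftGraph]
  exact integral_sub_right_eq_self (fun y => Hber (deriv g y) - Hber (deriv (parab t) y)) xh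

/-- The functions `f` competing in the rate function of a single parabola, for `(x̂, â) = (0, 0)`.
They carry the topology of pointwise convergence. -/
def centeredProfiles (t : ℝ) : Set (ℝ → ℝ) :=
  {g | LipschitzWith 1 g} ∩ Icc (parab t) (parab 0)

theorem isCompact_centeredProfiles (t : ℝ) : IsCompact (centeredProfiles t) :=
  isCompact_Icc.inter_left (isClosed_setOfPred_lipschitzWith 1)

theorem shiftGraph_constraints_iff (xh ah : ℝ) (g : ℝ → ℝ) :
    (LipschitzWith 1 (shiftGraph xh ah g) ∧ ∀ y, parabXA xh ah t y ≤ shiftGraph xh ah g y ∧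
      shiftGraph xh ah g y ≤ parabXA xh ah 0 y) ↔ g ∈ centeredProfiles t := by
  rw [forall_and]
  exact and_congr lipschitzWith_shiftGraph_iff
    (and_congr shiftGraph_le_shiftGraph_iff shiftGraph_le_shiftGraph_iff)

theorem deriv_parab_of_abs_lt (ht : 0 < t) {y : ℝ} (hy : |y| < t) : deriv (parab t) y = -y / t := by
  have quadratic : parab t =ᶠ[𝓝 y] fun x => -t / 2 - x ^ 2 / (2 * t) := by
    filter_upwards [continuous_abs.continuousAt.eventually_lt_const hy] with x hx
    simp [parab, ht, hx.le]
  have quadratic_deriv : HasDerivAt (fun x => -t / 2 - x ^ 2 / (2 * t)) (-y / t) y := by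
    refine (((hasDerivAt_pow 2 y).div_const (2 * t)).const_sub (-t / 2)).congr_deriv ?_
    field_simp
    norm_num
  exact (quadratic_deriv.congr_of_eventuallyEq quadratic).deriv

theorem intervalIntegrable_Hber_deriv_parab (ht : 0 < t) :
    IntervalIntegrable (fun y => Hber (deriv (parab t) y)) volume (-t) t := by
  have entropy_cont : Continuous fun y => Hber (-y / t) := continuous_Hber.comp (by fun_prop)
  refine (entropy_cont.intervalIntegrable (-t) t).congr_uIoo fun y hy => ?_
  rw [uIoo_of_le (neg_le_self ht.le)] at hy
  simp only [deriv_parab_of_abs_lt ht (abs_lt.2 hy)]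

theorem deriv_eq_of_mem_centeredProfiles {g : ℝ → ℝ} (hg : g ∈ centeredProfiles t) {y : ℝ}
    (hy : t < |y|) : deriv g y = deriv (parab t) y := by
  refine EventuallyEq.deriv_eq ?_
  filter_upwards [continuous_abs.continuousAt.eventually_const_lt hy] with x hx
  refine le_antisymm ((hg.2.2 x).trans_eq ?_) (hg.2.1 x)
  simp [parab, not_le.2 hx]

theorem excessEntropy_eq_of_mem_centeredProfiles (ht : 0 < t) {g : ℝ → ℝ}
    (hg : g ∈ centeredProfiles t) :
    excessEntropy 0 0 t g =
      (∫ y in (-t)..t, Hber (deriv g y)) - ∫ y in (-t)..t, Hber (deriv (parab t) y) := by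
  have hle : -t ≤ t := by linarith
  have hint : IntervalIntegrable (fun y => Hber (deriv g y)) volume (-t) t :=
    intervalIntegrable_comp_of_mem_Icc continuous_Hber (measurable_deriv g)
      (deriv_mem_Icc_of_lipschitzWith hg.1) _ _
  rw [← intervalIntegral.integral_sub hint (intervalIntegrable_Hber_deriv_parab ht),
    intervalIntegral.integral_of_le hle, ← integral_Icc_eq_integral_Ioc, excessEntropy,
    parabXA_zero_zero]
  refine (setIntegral_eq_integral_of_forall_compl_eq_zero fun y hy => ?_).symm
  rw [deriv_eq_of_mem_centeredProfiles hg (lt_of_not_ge fun h => hy (abs_le.1 h)), sub_self]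

theorem lowerSemicontinuousOn_excessEntropy (ht : 0 < t) :
    LowerSemicontinuousOn (excessEntropy 0 0 t) (centeredProfiles t) := by
  have hconv : ConvexOn ℝ (Icc (-(1 : ℝ≥0) : ℝ) (1 : ℝ≥0)) Hber := by simpa using convexOn_Hber
  have energy := (lowerSemicontinuousOn_integral_comp_deriv continuous_Hber hconv
    (neg_le_self ht.le)).mono (t := centeredProfiles t) inter_subset_left
  have excess := energy.add
    (lowerSemicontinuousOn_const (z := -∫ y in (-t)..t, Hber (deriv (parab t) y)))
  simp only [← sub_eq_add_neg] at excess
  exact fun g hg => LowerSemicontinuousWithinAt.congr_of_eventuallyEq (excess g hg) hg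
    (eventuallyEq_nhdsWithin_of_eqOn fun g' hg' =>
      (excessEntropy_eq_of_mem_centeredProfiles ht hg').symm)

end Profiles

section RateFunction

variable {mh m : ℕ}

/-- Initial data `(x̂, â)` and terminal data `(x, a)` of the rate function. -/
abbrev BoundaryData (mh m : ℕ) : Type :=
  (Fin mh → ℝ × ℝ) × (Fin m → ℝ × ℝ)

/-- The pairs of boundary data and recentered profiles `g k`, such that the translates of the
`g k` compete in the rate function: their maximum takes the value `a j` at each `x j`. -/
def admissiblePairs (t : ℝ) (mh m : ℕ) :
    Set (BoundaryData mh m × (Fin mh → ℝ → ℝ)) :=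
  {p | (∀ k, p.2 k ∈ centeredProfiles t) ∧
    ∀ j, (⨆ k, shiftGraph (p.1.1 k).1 (p.1.1 k).2 (p.2 k) (p.1.2 j).1) = (p.1.2 j).2}

theorem raterw_eq_biInf_admissiblePairs (t : ℝ) (q : BoundaryData mh m) :
    raterw t mh m q.1 q.2 = ⨅ g, ⨅ (_ : (q, g) ∈ admissiblePairs t mh m),
      ENNReal.ofReal (∑ k, excessEntropy 0 0 t (g k)) := by
  symm
  refine (Function.Surjective.piMap fun k =>
    shiftGraph_surjective (q.1 k).1 (q.1 k).2).iInf_congr _ fun g => ?_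
  refine iInf_congr_Prop ?_ fun _ => ?_
  · simp only [Pi.map_apply, shiftGraph_constraints_iff, admissiblePairs, mem_ofPred_eq]
  · simp only [Pi.map_apply, excessEntropy_shiftGraph]

theorem continuousOn_iSup_shiftGraph [NeZero mh] (K : ℝ≥0) (j : Fin m) :
    ContinuousOn (fun p : BoundaryData mh m × (Fin mh → ℝ → ℝ) =>
        ⨆ k, shiftGraph (p.1.1 k).1 (p.1.1 k).2 (p.2 k) (p.1.2 j).1)
      {p | ∀ k, LipschitzWith K (p.2 k)} := by
  simp only [← Finset.sup'_univ_eq_ciSup]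
  refine ContinuousOn.finset_sup'_apply _ fun k _ => ContinuousOn.add ?_ (by fun_prop)
  exact (continuousOn_eval_lipschitzWith K).comp
    (f := fun p : BoundaryData mh m × (Fin mh → ℝ → ℝ) => (p.2 k, (p.1.2 j).1 - (p.1.1 k).1))
    (by fun_prop) fun p hp => ⟨hp k, mem_univ _⟩

theorem isClosed_admissiblePairs [NeZero mh] (t : ℝ) : IsClosed (admissiblePairs t mh m) := by
  have profiles_closed : IsClosed
      {p : BoundaryData mh m × (Fin mh → ℝ → ℝ) | ∀ k, p.2 k ∈ centeredProfiles t} := by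
    simp only [ofPred_forall]
    exact isClosed_iInter fun k => (isCompact_centeredProfiles t).isClosed.preimage (by fun_prop)
  have defect_cont : ContinuousOn (fun (p : BoundaryData mh m × (Fin mh → ℝ → ℝ)) j =>
      (⨆ k, shiftGraph (p.1.1 k).1 (p.1.1 k).2 (p.2 k) (p.1.2 j).1) - (p.1.2 j).2)
      {p | ∀ k, p.2 k ∈ centeredProfiles t} :=
    continuousOn_pi.2 fun j => ((continuousOn_iSup_shiftGraph 1 j).mono fun _ hp k => (hp k).1).sub
      (by fun_prop)
  convert defect_cont.preimage_isClosed_of_isClosed profiles_closed (isClosed_singleton (x := 0))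
    using 1
  ext p
  simp [admissiblePairs, funext_iff, sub_eq_zero]

end RateFunction

/-- Lemma D.4 (l.raterw.lsc): the finite-dimensional rate function is lower semicontinuous
in the initial and terminal data. -/
theorem raterw_lowerSemicontinuous
    (t : ℝ) (ht : 0 < t) (mh m : ℕ) (hmh : 1 ≤ mh) (hm : 1 ≤ m) :
    LowerSemicontinuous
      (fun q : (Fin mh → ℝ × ℝ) × (Fin m → ℝ × ℝ) => raterw t mh m q.1 q.2) := by
  have : NeZero mh := ⟨Nat.one_le_iff_ne_zero.1 hmh⟩
  have hK : IsCompact (univ.pi fun _ : Fin mh => centeredProfiles t) :=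
    isCompact_univ_pi fun _ => isCompact_centeredProfiles t
  have hΦ : LowerSemicontinuousOn (fun p : BoundaryData mh m × (Fin mh → ℝ → ℝ) =>
      ENNReal.ofReal (∑ k, excessEntropy 0 0 t (p.2 k))) (admissiblePairs t mh m) := by
    refine ENNReal.continuous_ofReal.comp_lowerSemicontinuousOn ?_ ENNReal.ofReal_mono
    refine lowerSemicontinuousOn_sum fun k _ => ?_
    exact (lowerSemicontinuousOn_excessEntropy ht).comp (by fun_prop) fun p hp => hp.1 k
  simp only [raterw_eq_biInf_admissiblePairs]
  exact lowerSemicontinuous_biInf_of_isCompact hK (isClosed_admissiblePairs t)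
    (fun p hp k _ => hp.1 k) hΦ
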